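/- arXiv:1306.1581 — 4 statements merged into one kernel-verified Lean document; each statement's English description precedes it below -/
import Mathlib

section
/- Let n ≥ 2 and let κ, μ ∈ ℝⁿ both lie in the Gårding cone Γ₂. Then the polarized second symmetric function satisfies the Gårding inequality σ_{1,1}(κ, μ) ≥ √(σ₂(κ) · σ₂(μ)). -/
open Finset

/-- First elementary symmetric polynomial: σ₁(κ) = ∑ i, κ i. -/
noncomputable def sigma1 {n : ℕ} (κ : Fin n → ℝ) : ℝ := ∑ i, κ i

/-- Second elementary symmetric polynomial: σ₂(κ) = ∑_{i<j} κ i * κ j. -/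
noncomputable def sigma2 {n : ℕ} (κ : Fin n → ℝ) : ℝ :=
  ∑ p ∈ Finset.univ.filter (fun p : Fin n × Fin n => p.1 < p.2), κ p.1 * κ p.2

/-- Polarization of σ₂: σ_{1,1}(κ, μ) = (1/2)(σ₁(κ)σ₁(μ) − ∑ i, κ i * μ i). -/
noncomputable def sigma11 {n : ℕ} (κ μ : Fin n → ℝ) : ℝ :=
  (1 / 2) * (sigma1 κ * sigma1 μ - ∑ i, κ i * μ i)

/-!
Since `2 σ₂(κ) = σ₁(κ)² - ∑ κᵢ²`, the inequality is, up to a sign, the reverse Cauchy–Schwarz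
(Aczél) inequality `(a² - ‖x‖²) (b² - ‖y‖²) ≤ (a b - ⟪x, y⟫)²` with `a = σ₁(κ)`, `b = σ₁(μ)`,
`x = κ` and `y = μ`. The sign is settled by Cauchy–Schwarz: the two vectors lie in the same nappe
of the light cone, so `⟪x, y⟫ ≤ ‖x‖ ‖y‖ ≤ a b`.
-/

theorem sq_sum_eq_sum_sq_add_two_mul_sum_lt {ι R : Type*} [Fintype ι] [LinearOrder ι]
    [CommSemiring R] (f : ι → R) :
    (∑ i, f i) ^ 2 = ∑ i, f i ^ 2 + 2 * ∑ p : ι × ι with p.1 < p.2, f p.1 * f p.2 := by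
  have sum_lt : ∑ p : ι × ι with p.1 < p.2, f p.1 * f p.2 =
      ∑ i, ∑ j, if i < j then f i * f j else 0 := by
    rw [sum_filter, Fintype.sum_prod_type]
  have sum_gt : ∑ p : ι × ι with p.1 < p.2, f p.1 * f p.2 =
      ∑ i, ∑ j, if j < i then f i * f j else 0 := by
    rw [sum_lt, sum_comm]
    simp only [mul_comm]
  have sum_diag : ∑ i, f i ^ 2 = ∑ i, ∑ j, if i = j then f i * f j else 0 := by
    simp [sq]
  have trichotomy (i j : ι) : f i * f j = (if i = j then f i * f j else 0) +
      ((if i < j then f i * f j else 0) + if j < i then f i * f j else 0) := by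
    rcases lt_trichotomy i j with hlt | rfl | hgt
    · simp [hlt, hlt.ne, hlt.not_gt]
    · simp
    · simp [hgt, hgt.ne', hgt.not_gt]
  calc (∑ i, f i) ^ 2 = ∑ i, ∑ j, f i * f j := by rw [sq, sum_mul_sum]
    _ = ∑ i, ∑ j, ((if i = j then f i * f j else 0) +
        ((if i < j then f i * f j else 0) + if j < i then f i * f j else 0)) :=
      sum_congr rfl fun i _ ↦ sum_congr rfl fun j _ ↦ trichotomy i j
    _ = ∑ i, f i ^ 2 + 2 * ∑ p : ι × ι with p.1 < p.2, f p.1 * f p.2 := by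
      simp only [sum_add_distrib]
      rw [← sum_diag, ← sum_lt, ← sum_gt, two_mul]

section LightCone

variable {ι R : Type*} [CommRing R] [LinearOrder R] [IsStrictOrderedRing R]
  {s : Finset ι} {f g : ι → R} {a b : R}

theorem sum_mul_le_mul_of_sum_sq_le_sq (ha : 0 ≤ a) (hb : 0 ≤ b)
    (hf : ∑ i ∈ s, f i ^ 2 ≤ a ^ 2) (hg : ∑ i ∈ s, g i ^ 2 ≤ b ^ 2) :
    ∑ i ∈ s, f i * g i ≤ a * b := by
  refine le_of_abs_le (abs_le_of_sq_le_sq ?_ (mul_nonneg ha hb))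
  calc (∑ i ∈ s, f i * g i) ^ 2 ≤ (∑ i ∈ s, f i ^ 2) * ∑ i ∈ s, g i ^ 2 :=
        sum_mul_sq_le_sq_mul_sq s f g
    _ ≤ a ^ 2 * b ^ 2 :=
        mul_le_mul hf hg (sum_nonneg fun i _ ↦ sq_nonneg (g i)) (sq_nonneg a)
    _ = (a * b) ^ 2 := (mul_pow a b 2).symm

theorem aczel_inequality (hf : ∑ i ∈ s, f i ^ 2 ≤ a ^ 2) (g : ι → R) (b : R) :
    (a ^ 2 - ∑ i ∈ s, f i ^ 2) * (b ^ 2 - ∑ i ∈ s, g i ^ 2) ≤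
      (a * b - ∑ i ∈ s, f i * g i) ^ 2 := by
  have cauchy_schwarz := sum_mul_sq_le_sq_mul_sq s f g
  have X_nonneg : 0 ≤ ∑ i ∈ s, f i ^ 2 := sum_nonneg fun i _ ↦ sq_nonneg (f i)
  have Y_nonneg : 0 ≤ ∑ i ∈ s, g i ^ 2 := sum_nonneg fun i _ ↦ sq_nonneg (g i)
  set X := ∑ i ∈ s, f i ^ 2
  set Y := ∑ i ∈ s, g i ^ 2
  set c := ∑ i ∈ s, f i * g i
  rw [← sub_nonneg]
  rcases X_nonneg.eq_or_lt with X_eq_zero | X_pos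
  · have c_eq_zero : c = 0 := by
      rw [← X_eq_zero, zero_mul] at cauchy_schwarz
      exact (sq_nonpos_iff c).1 cauchy_schwarz
    have defect_eq : (a * b - c) ^ 2 - (a ^ 2 - X) * (b ^ 2 - Y) = a ^ 2 * Y := by
      rw [c_eq_zero, ← X_eq_zero]
      ring
    rw [defect_eq]
    exact mul_nonneg (sq_nonneg a) Y_nonneg
  · -- Complete the square in `b`, in which the defect is quadratic with leading coefficient `X`.
    have mul_defect_eq : X * ((a * b - c) ^ 2 - (a ^ 2 - X) * (b ^ 2 - Y)) =
        (X * b - a * c) ^ 2 + (a ^ 2 - X) * (X * Y - c ^ 2) := by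
      ring
    refine nonneg_of_mul_nonneg_right ?_ X_pos
    rw [mul_defect_eq]
    exact add_nonneg (sq_nonneg _) (mul_nonneg (sub_nonneg.2 hf) (sub_nonneg.2 cauchy_schwarz))

end LightCone

section Sigma

variable {n : ℕ} {κ μ : Fin n → ℝ}

theorem two_mul_sigma2 (κ : Fin n → ℝ) : 2 * sigma2 κ = sigma1 κ ^ 2 - ∑ i, κ i ^ 2 :=
  eq_sub_of_add_eq' (sq_sum_eq_sum_sq_add_two_mul_sum_lt κ).symm

theorem sigma2_nonneg_iff : 0 ≤ sigma2 κ ↔ ∑ i, κ i ^ 2 ≤ sigma1 κ ^ 2 := by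
  rw [← sub_nonneg (b := ∑ i, κ i ^ 2), ← two_mul_sigma2, mul_nonneg_iff_of_pos_left two_pos]

theorem sigma11_nonneg (hκ1 : 0 ≤ sigma1 κ) (hκ2 : 0 ≤ sigma2 κ)
    (hμ1 : 0 ≤ sigma1 μ) (hμ2 : 0 ≤ sigma2 μ) : 0 ≤ sigma11 κ μ :=
  mul_nonneg one_half_pos.le <| sub_nonneg.2 <| sum_mul_le_mul_of_sum_sq_le_sq hκ1 hμ1
    (sigma2_nonneg_iff.1 hκ2) (sigma2_nonneg_iff.1 hμ2)

theorem sigma2_mul_sigma2_le_sigma11_sq (hκ : 0 ≤ sigma2 κ) (μ : Fin n → ℝ) :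
    sigma2 κ * sigma2 μ ≤ sigma11 κ μ ^ 2 := by
  have aczel := aczel_inequality (sigma2_nonneg_iff.1 hκ) μ (sigma1 μ)
  rw [← two_mul_sigma2, ← two_mul_sigma2] at aczel
  rw [sigma11, mul_pow]
  linarith

end Sigma

/-- Gårding's inequality: for κ, μ in the Gårding cone Γ₂,
    σ_{1,1}(κ, μ) ≥ √(σ₂(κ)·σ₂(μ)). -/
theorem garding_inequality {n : ℕ} (hn : 2 ≤ n) (κ μ : Fin n → ℝ)
    (hκ1 : sigma1 κ > 0) (hκ2 : sigma2 κ > 0)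
    (hμ1 : sigma1 μ > 0) (hμ2 : sigma2 μ > 0) :
    sigma11 κ μ ≥ Real.sqrt (sigma2 κ * sigma2 μ) := by
  exact Real.sqrt_le_iff.2 ⟨sigma11_nonneg hκ1.le hκ2.le hμ1.le hμ2.le,
    sigma2_mul_sigma2_le_sigma11_sq hκ2.le μ⟩
end

section
/- Let n ≥ 2 and let κ, μ ∈ ℝⁿ both lie in the Gårding cone Γ₂. If equality holds in the Gårding inequality, i.e. σ_{1,1}(κ, μ) = √(σ₂(κ) · σ₂(μ)), then there exists a constant c > 0 such that μ = c·κ (componentwise). -/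
open Finset

section

variable {n : ℕ} {κ μ : Fin n → ℝ}

theorem sigma2_eq_half_sigma1_sq_sub_sum_sq (κ : Fin n → ℝ) :
    sigma2 κ = 1 / 2 * (sigma1 κ ^ 2 - ∑ i, κ i ^ 2) := by
  have sigma1_sq : sigma1 κ ^ 2 = ∑ i, κ i ^ 2 + 2 * sigma2 κ :=
    sq_sum_eq_sum_sq_add_two_mul_sum_lt κ
  linarith

theorem sigma1_sub_smul (κ μ : Fin n → ℝ) (c : ℝ) :
    sigma1 (μ - c • κ) = sigma1 μ - c * sigma1 κ := by
  simp [sigma1, mul_sum]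

theorem sigma2_sub_smul (κ μ : Fin n → ℝ) (c : ℝ) :
    sigma2 (μ - c • κ) = sigma2 μ - 2 * c * sigma11 κ μ + c ^ 2 * sigma2 κ := by
  have sum_sq_sub_smul : ∑ i, (μ - c • κ) i ^ 2 =
      ∑ i, μ i ^ 2 - 2 * c * ∑ i, κ i * μ i + c ^ 2 * ∑ i, κ i ^ 2 := by
    simp only [mul_sum, ← sum_sub_distrib, ← sum_add_distrib, Pi.sub_apply, Pi.smul_apply,
      smul_eq_mul]
    exact sum_congr rfl fun i _ => by ring
  simp only [sigma2_eq_half_sigma1_sq_sub_sum_sq, sigma1_sub_smul, sum_sq_sub_smul, sigma11]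
  ring

theorem eq_zero_of_sigma1_eq_zero_of_sigma2_nonneg (h₁ : sigma1 κ = 0) (h₂ : 0 ≤ sigma2 κ) :
    κ = 0 := by
  have sum_sq_nonpos : ∑ i, κ i ^ 2 ≤ 0 := by
    rw [sigma2_eq_half_sigma1_sq_sub_sum_sq, h₁] at h₂
    linarith
  have sum_sq_eq_zero : ∑ i, κ i ^ 2 = 0 :=
    sum_sq_nonpos.antisymm (sum_nonneg fun i _ => sq_nonneg (κ i))
  funext i
  exact sq_eq_zero_iff.mp
    ((sum_eq_zero_iff_of_nonneg fun i _ => sq_nonneg (κ i)).mp sum_sq_eq_zero i (mem_univ i))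

theorem sigma2_sub_smul_eq_sq_of_sigma11_eq_sqrt (hκ : 0 ≤ sigma2 κ) (hμ : 0 ≤ sigma2 μ)
    (heq : sigma11 κ μ = √(sigma2 κ * sigma2 μ)) (c : ℝ) :
    sigma2 (μ - c • κ) = (√(sigma2 μ) - c * √(sigma2 κ)) ^ 2 := by
  rw [sigma2_sub_smul, heq, Real.sqrt_mul hκ, sub_sq, mul_pow, Real.sq_sqrt hκ, Real.sq_sqrt hμ]
  ring

theorem garding_equality_case_general (hκ₁ : sigma1 κ ≠ 0) (hκ₂ : 0 ≤ sigma2 κ)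
    (hμ₂ : 0 ≤ sigma2 μ) (heq : sigma11 κ μ = √(sigma2 κ * sigma2 μ)) :
    μ = (sigma1 μ / sigma1 κ) • κ := by
  refine sub_eq_zero.mp (eq_zero_of_sigma1_eq_zero_of_sigma2_nonneg ?_ ?_)
  · rw [sigma1_sub_smul, div_mul_cancel₀ _ hκ₁, sub_self]
  · rw [sigma2_sub_smul_eq_sq_of_sigma11_eq_sqrt hκ₂ hμ₂ heq]
    exact sq_nonneg _

end

/-- Equality case in Gårding's inequality: if κ, μ ∈ Γ₂ and
    σ_{1,1}(κ, μ) = √(σ₂(κ)·σ₂(μ)), then μ = c·κ for some c > 0. -/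
theorem garding_equality_case {n : ℕ} (hn : 2 ≤ n) (κ μ : Fin n → ℝ)
    (hκ1 : sigma1 κ > 0) (hκ2 : sigma2 κ > 0)
    (hμ1 : sigma1 μ > 0) (hμ2 : sigma2 μ > 0)
    (heq : sigma11 κ μ = Real.sqrt (sigma2 κ * sigma2 μ)) :
    ∃ c : ℝ, c > 0 ∧ ∀ i, μ i = c * κ i := by
  exact ⟨sigma1 μ / sigma1 κ, div_pos hμ1 hκ1,
    congrFun (garding_equality_case_general hκ1.ne' hκ2.le hμ2.le heq)⟩
end

section
/- Let n ≥ 2 and let A, B be real symmetric n×n matrices with tr(A) > 0, tr(B) > 0, and σ₂(A) = σ₂(B) > 0. Then 2·σ₂(A) ≤ tr(A)·tr(B) − tr(A·B), i.e. σ₂(A) ≤ σ_{1,1}(A, B); moreover equality σ₂(A) = σ_{1,1}(A, B) holds if and only if A = B. -/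
open Matrix

/-- Second elementary symmetric function of the eigenvalues of a matrix:
    σ₂(A) = (1/2)((tr A)² − tr(A²)). -/
noncomputable def sigma2M {n : ℕ} (A : Matrix (Fin n) (Fin n) ℝ) : ℝ :=
  (1 / 2) * ((A.trace) ^ 2 - (A * A).trace)

/-- Polarization of σ₂ for matrices: σ_{1,1}(A, B) = (1/2)(tr A · tr B − tr(AB)). -/
noncomputable def sigma11M {n : ℕ} (A B : Matrix (Fin n) (Fin n) ℝ) : ℝ :=
  (1 / 2) * (A.trace * B.trace - (A * B).trace)

/-!
On symmetric matrices the quadratic form `σ₂` is negative definite on the hyperplane `tr = 0`,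
because there `σ₂(C) = -tr(CᵀC) / 2`. The matrix `C = tr(B) A - tr(A) B` lies on that
hyperplane, and expanding `σ₂(C)` and completing the square gives
`2 tr(A) tr(B) (σ₁₁(A, B) - √(σ₂(A) σ₂(B))) = (tr(B) √σ₂(A) - tr(A) √σ₂(B))² - σ₂(C) ≥ 0`,
the reversed Cauchy–Schwarz inequality, with equality only when `C = 0`.
-/

section Sigma

variable {n : ℕ} {A B C : Matrix (Fin n) (Fin n) ℝ}

theorem sigma2M_smul (t : ℝ) (A : Matrix (Fin n) (Fin n) ℝ) :
    sigma2M (t • A) = t ^ 2 * sigma2M A := by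
  simp only [sigma2M, smul_mul_assoc, mul_smul_comm, trace_smul, smul_eq_mul]
  ring

theorem sigma2M_smul_sub_smul (s t : ℝ) (A B : Matrix (Fin n) (Fin n) ℝ) :
    sigma2M (s • A - t • B) =
      s ^ 2 * sigma2M A - 2 * (s * t) * sigma11M A B + t ^ 2 * sigma2M B := by
  simp only [sigma2M, sigma11M, sub_mul, mul_sub, smul_mul_assoc, mul_smul_comm, trace_sub,
    trace_smul, smul_eq_mul, trace_mul_comm B A]
  ring

theorem sigma2M_eq_neg_half_trace_conjTranspose_mul_self (hC : C.IsSymm) (htr : C.trace = 0) :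
    sigma2M C = -(1 / 2) * (Cᴴ * C).trace := by
  rw [sigma2M, htr, conjTranspose_eq_transpose_of_trivial, hC.eq]
  ring

theorem sigma2M_nonpos_of_trace_eq_zero (hC : C.IsSymm) (htr : C.trace = 0) : sigma2M C ≤ 0 := by
  have hnonneg : 0 ≤ (Cᴴ * C).trace := (posSemidef_conjTranspose_mul_self C).trace_nonneg
  rw [sigma2M_eq_neg_half_trace_conjTranspose_mul_self hC htr]
  linarith

theorem sigma2M_eq_zero_iff_of_trace_eq_zero (hC : C.IsSymm) (htr : C.trace = 0) :
    sigma2M C = 0 ↔ C = 0 := by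
  rw [sigma2M_eq_neg_half_trace_conjTranspose_mul_self hC htr, mul_eq_zero_iff_left (by norm_num),
    trace_conjTranspose_mul_self_eq_zero_iff]

theorem two_mul_sigma11M_sub_sqrt (s t : ℝ) (hσA : 0 ≤ sigma2M A) (hσB : 0 ≤ sigma2M B) :
    2 * (s * t) * (sigma11M A B - √(sigma2M A * sigma2M B)) =
      (s * √(sigma2M A) - t * √(sigma2M B)) ^ 2 - sigma2M (s • A - t • B) := by
  rw [sigma2M_smul_sub_smul, Real.sqrt_mul hσA]
  linear_combination -s ^ 2 * Real.sq_sqrt hσA - t ^ 2 * Real.sq_sqrt hσB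

theorem mul_sqrt_sigma2M_eq_of_smul_eq_smul {s t : ℝ} (hs : 0 ≤ s) (ht : 0 ≤ t)
    (h : s • A = t • B) : s * √(sigma2M A) = t * √(sigma2M B) := by
  have hσ : s ^ 2 * sigma2M A = t ^ 2 * sigma2M B := by rw [← sigma2M_smul, h, sigma2M_smul]
  have hsqrt := congrArg Real.sqrt hσ
  rwa [Real.sqrt_mul (sq_nonneg s), Real.sqrt_mul (sq_nonneg t), Real.sqrt_sq hs,
    Real.sqrt_sq ht] at hsqrt

theorem trace_smul_eq_trace_smul_iff (htA : 0 < A.trace) (htB : 0 < B.trace)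
    (hσ : sigma2M A = sigma2M B) (hσA : 0 < sigma2M A) :
    B.trace • A = A.trace • B ↔ A = B := by
  refine ⟨fun hprop ↦ ?_, fun hAB ↦ by rw [hAB]⟩
  have htrace : B.trace = A.trace := by
    have hsqrt := mul_sqrt_sigma2M_eq_of_smul_eq_smul htB.le htA.le hprop
    rw [← hσ] at hsqrt
    exact mul_right_cancel₀ (Real.sqrt_pos.mpr hσA).ne' hsqrt
  rw [htrace] at hprop
  exact smul_right_injective _ htA.ne' hprop

end Sigma

theorem garding_matrix_lemma_general {n : ℕ} (A B : Matrix (Fin n) (Fin n) ℝ)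
    (hA : A.IsSymm) (hB : B.IsSymm) (htA : 0 < A.trace) (htB : 0 < B.trace)
    (hσA : 0 ≤ sigma2M A) (hσB : 0 ≤ sigma2M B) :
    √(sigma2M A * sigma2M B) ≤ sigma11M A B ∧
      (√(sigma2M A * sigma2M B) = sigma11M A B ↔ B.trace • A = A.trace • B) := by
  have hweight : 0 < 2 * (B.trace * A.trace) := by positivity
  have hidentity := two_mul_sigma11M_sub_sqrt B.trace A.trace hσA hσB
  have hsquare := sq_nonneg (B.trace * √(sigma2M A) - A.trace * √(sigma2M B))
  have hsymm : (B.trace • A - A.trace • B).IsSymm := (hA.smul _).sub (hB.smul _)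
  have htrace : (B.trace • A - A.trace • B).trace = 0 := by
    simp only [trace_sub, trace_smul, smul_eq_mul]
    ring
  have hnonpos := sigma2M_nonpos_of_trace_eq_zero hsymm htrace
  refine ⟨?_, fun heq ↦ ?_, fun hprop ↦ ?_⟩
  · refine sub_nonneg.mp (nonneg_of_mul_nonneg_right ?_ hweight)
    linarith
  · rw [heq, sub_self, mul_zero] at hidentity
    have hzero : sigma2M (B.trace • A - A.trace • B) = 0 := by linarith
    exact sub_eq_zero.mp ((sigma2M_eq_zero_iff_of_trace_eq_zero hsymm htrace).mp hzero)
  · rw [mul_sqrt_sigma2M_eq_of_smul_eq_smul htB.le htA.le hprop,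
      (sigma2M_eq_zero_iff_of_trace_eq_zero hsymm htrace).mpr (sub_eq_zero.mpr hprop)] at hidentity
    have hdiff : sigma11M A B - √(sigma2M A * sigma2M B) = 0 :=
      (mul_eq_zero_iff_left hweight.ne').mp (by linarith)
    exact (sub_eq_zero.mp hdiff).symm

/-- For real symmetric matrices A, B with tr A > 0, tr B > 0 and
    σ₂(A) = σ₂(B) > 0, one has σ₂(A) ≤ σ_{1,1}(A, B), i.e.
    2σ₂(A) ≤ tr A · tr B − tr(AB), with equality iff A = B. -/
theorem garding_matrix_lemma {n : ℕ} (hn : 2 ≤ n)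
    (A B : Matrix (Fin n) (Fin n) ℝ) (hA : A.IsSymm) (hB : B.IsSymm)
    (htA : A.trace > 0) (htB : B.trace > 0)
    (hσ : sigma2M A = sigma2M B) (hσA : sigma2M A > 0) :
    2 * sigma2M A ≤ A.trace * B.trace - (A * B).trace ∧
      (sigma2M A = sigma11M A B ↔ A = B) := by
  have h := garding_matrix_lemma_general A B hA hB htA htB hσA.le (hσ ▸ hσA.le)
  rw [← hσ, Real.sqrt_mul_self hσA.le, trace_smul_eq_trace_smul_iff htA htB hσ hσA] at h
  exact ⟨by linarith [h.1.trans_eq (sigma11M.eq_def A B)], h.2⟩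
end

section
/- Let n ≥ 2 and let A, B be real symmetric n×n matrices with tr(A) > 0, tr(B) > 0, σ₂(A) > 0 and σ₂(B) > 0. Then σ_{1,1}(A, B) ≥ √(σ₂(A) · σ₂(B)), and equality holds if and only if B = c·A for some constant c > 0. -/
open Matrix

/-!
For symmetric `A`, `B` the trace form `tr (A * B)` is the Euclidean inner product of the entries, so
`2 σ₁,₁(A, B) = tr A · tr B - ⟪A, B⟫` is the Lorentz form on `ℝ × E` evaluated at `(tr A, A)` and
`(tr B, B)`, where `E` is the Euclidean space of matrices. The hypotheses say that both vectors are
timelike and future-directed, and the theorem is the reversed Cauchy–Schwarz inequality (Aczél's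
inequality) for such vectors. For `(a, x)` and `(b, y)`, its defect times `a ^ 2` is a square
plus a positive multiple of `‖a • y - b • x‖ ^ 2`, which also settles the case of equality.
-/

section Aczel

open scoped InnerProductSpace

theorem sq_mul_aczel_defect_eq {E : Type*} [SeminormedAddCommGroup E] [InnerProductSpace ℝ E]
    (a b : ℝ) (x y : E) :
    a ^ 2 * ((a * b - ⟪x, y⟫_ℝ) ^ 2 - (a ^ 2 - ‖x‖ ^ 2) * (b ^ 2 - ‖y‖ ^ 2)) =
      (a * ⟪x, y⟫_ℝ - b * ‖x‖ ^ 2) ^ 2 + (a ^ 2 - ‖x‖ ^ 2) * ‖a • y - b • x‖ ^ 2 := by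
  have norm_sq_expand :
      ‖a • y - b • x‖ ^ 2 = a ^ 2 * ‖y‖ ^ 2 - 2 * (a * b * ⟪x, y⟫_ℝ) + b ^ 2 * ‖x‖ ^ 2 := by
    rw [norm_sub_sq_real, real_inner_smul_left, real_inner_smul_right, real_inner_comm, norm_smul,
      norm_smul, mul_pow, mul_pow, Real.norm_eq_abs, Real.norm_eq_abs, sq_abs, sq_abs, mul_assoc a]
  rw [norm_sq_expand]
  ring

theorem aczel_inequality_s5 {E : Type*} [SeminormedAddCommGroup E] [InnerProductSpace ℝ E]
    {a : ℝ} {x : E} (hx : ‖x‖ ^ 2 < a ^ 2) (b : ℝ) (y : E) :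
    (a ^ 2 - ‖x‖ ^ 2) * (b ^ 2 - ‖y‖ ^ 2) ≤ (a * b - ⟪x, y⟫_ℝ) ^ 2 := by
  have ha : 0 < a ^ 2 := (sq_nonneg ‖x‖).trans_lt hx
  have hgap : 0 ≤ a ^ 2 - ‖x‖ ^ 2 := sub_nonneg.mpr hx.le
  refine sub_nonneg.mp (nonneg_of_mul_nonneg_right ?_ ha)
  rw [sq_mul_aczel_defect_eq]
  exact add_nonneg (sq_nonneg _) (mul_nonneg hgap (sq_nonneg _))

theorem aczel_eq_iff {E : Type*} [NormedAddCommGroup E] [InnerProductSpace ℝ E]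
    {a : ℝ} {x : E} (hx : ‖x‖ ^ 2 < a ^ 2) (b : ℝ) (y : E) :
    (a ^ 2 - ‖x‖ ^ 2) * (b ^ 2 - ‖y‖ ^ 2) = (a * b - ⟪x, y⟫_ℝ) ^ 2 ↔ a • y = b • x := by
  have ha : a ^ 2 ≠ 0 := ((sq_nonneg ‖x‖).trans_lt hx).ne'
  have hgap : 0 < a ^ 2 - ‖x‖ ^ 2 := sub_pos.mpr hx
  rw [eq_comm, ← sub_eq_zero, ← mul_eq_zero_iff_left ha, sq_mul_aczel_defect_eq,
    add_eq_zero_iff_of_nonneg (sq_nonneg _) (by positivity), mul_eq_zero_iff_left hgap.ne',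
    sq_eq_zero_iff, sq_eq_zero_iff, norm_eq_zero, sub_eq_zero, sub_eq_zero, and_iff_right_iff_imp]
  intro h
  rw [← real_inner_smul_right, h, real_inner_smul_right, real_inner_self_eq_norm_sq]

theorem real_inner_le_mul_of_norm_le {E : Type*} [SeminormedAddCommGroup E] [InnerProductSpace ℝ E]
    {a b : ℝ} {x y : E} (hx : ‖x‖ ≤ a) (hy : ‖y‖ ≤ b) : ⟪x, y⟫_ℝ ≤ a * b :=
  (real_inner_le_norm x y).trans
    (mul_le_mul hx hy (norm_nonneg y) ((norm_nonneg x).trans hx))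

end Aczel

theorem smul_eq_smul_iff_exists_pos_smul {K V : Type*} [Field K] [LinearOrder K]
    [IsStrictOrderedRing K] [AddCommGroup V] [Module K V] (f : V →ₗ[K] K) {x y : V}
    (hx : 0 < f x) (hy : 0 < f y) : f x • y = f y • x ↔ ∃ c : K, 0 < c ∧ y = c • x := by
  constructor
  · intro h
    refine ⟨f y / f x, div_pos hy hx, ?_⟩
    rw [div_eq_inv_mul, mul_smul, ← h, inv_smul_smul₀ hx.ne']
  · rintro ⟨c, -, rfl⟩
    rw [map_smul, smul_eq_mul, mul_comm, mul_smul, smul_comm]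

section EuclideanVec

open scoped InnerProductSpace

variable {m n : Type*}

/-- The vectorization of a real matrix as a vector of Euclidean space, whose norm is the Frobenius
norm. It makes the Frobenius inner product available without putting a norm on matrices. -/
def euclideanVec (A : Matrix m n ℝ) : EuclideanSpace ℝ (n × m) :=
  WithLp.toLp 2 A.vec

theorem euclideanVec_injective :
    Function.Injective (euclideanVec : Matrix m n ℝ → EuclideanSpace ℝ (n × m)) :=
  (WithLp.toLp_injective 2).comp vec_bijective.injective

theorem euclideanVec_smul (c : ℝ) (A : Matrix m n ℝ) :
    euclideanVec (c • A) = c • euclideanVec A :=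
  rfl

theorem inner_euclideanVec [Fintype m] [Fintype n] (A B : Matrix m n ℝ) :
    ⟪euclideanVec A, euclideanVec B⟫_ℝ = (Aᵀ * B).trace := by
  rw [euclideanVec, euclideanVec, EuclideanSpace.inner_toLp_toLp, star_trivial, dotProduct_comm,
    vec_dotProduct_vec]

end EuclideanVec

section Sigma

open scoped InnerProductSpace

variable {n : ℕ} {A B : Matrix (Fin n) (Fin n) ℝ}

theorem sigma11M_eq_inner (hA : A.IsSymm) (B : Matrix (Fin n) (Fin n) ℝ) :
    sigma11M A B = 1 / 2 * (A.trace * B.trace - ⟪euclideanVec A, euclideanVec B⟫_ℝ) := by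
  rw [sigma11M, inner_euclideanVec, hA.eq]

theorem sigma2M_eq_norm_sq (hA : A.IsSymm) :
    sigma2M A = 1 / 2 * (A.trace ^ 2 - ‖euclideanVec A‖ ^ 2) := by
  rw [sigma2M, ← real_inner_self_eq_norm_sq, inner_euclideanVec, hA.eq]

theorem sigma2M_pos_iff (hA : A.IsSymm) : 0 < sigma2M A ↔ ‖euclideanVec A‖ ^ 2 < A.trace ^ 2 := by
  rw [sigma2M_eq_norm_sq hA, mul_pos_iff_of_pos_left one_half_pos, sub_pos]

theorem sigma2M_nonneg_iff (hA : A.IsSymm) (htA : 0 ≤ A.trace) :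
    0 ≤ sigma2M A ↔ ‖euclideanVec A‖ ≤ A.trace := by
  rw [sigma2M_eq_norm_sq hA, mul_nonneg_iff_of_pos_left one_half_pos, sub_nonneg,
    sq_le_sq₀ (norm_nonneg _) htA]

theorem sigma11M_nonneg (hA : A.IsSymm) (hB : B.IsSymm) (htA : 0 ≤ A.trace) (htB : 0 ≤ B.trace)
    (hσA : 0 ≤ sigma2M A) (hσB : 0 ≤ sigma2M B) : 0 ≤ sigma11M A B := by
  rw [sigma11M_eq_inner hA]
  exact mul_nonneg one_half_pos.le <| sub_nonneg.mpr <| real_inner_le_mul_of_norm_le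
    ((sigma2M_nonneg_iff hA htA).mp hσA) ((sigma2M_nonneg_iff hB htB).mp hσB)

theorem sigma2M_mul_sigma2M_le_sigma11M_sq (hA : A.IsSymm) (hB : B.IsSymm) (hσA : 0 < sigma2M A) :
    sigma2M A * sigma2M B ≤ sigma11M A B ^ 2 := by
  rw [sigma2M_eq_norm_sq hA, sigma2M_eq_norm_sq hB, sigma11M_eq_inner hA]
  linarith [aczel_inequality_s5 ((sigma2M_pos_iff hA).mp hσA) B.trace (euclideanVec B)]

theorem sigma2M_mul_sigma2M_eq_sigma11M_sq_iff (hA : A.IsSymm) (hB : B.IsSymm)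
    (hσA : 0 < sigma2M A) :
    sigma2M A * sigma2M B = sigma11M A B ^ 2 ↔ A.trace • B = B.trace • A := by
  rw [← euclideanVec_injective.eq_iff, euclideanVec_smul, euclideanVec_smul,
    ← aczel_eq_iff ((sigma2M_pos_iff hA).mp hσA), sigma2M_eq_norm_sq hA, sigma2M_eq_norm_sq hB,
    sigma11M_eq_inner hA, mul_mul_mul_comm, mul_pow, ← sq]
  exact mul_right_inj' (by norm_num)

end Sigma

/-- Gårding's inequality for real symmetric matrices: if tr A > 0, tr B > 0,
    σ₂(A) > 0 and σ₂(B) > 0, then σ_{1,1}(A, B) ≥ √(σ₂(A)·σ₂(B)), with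
    equality iff B = c·A for some c > 0. -/
theorem garding_matrix_inequality {n : ℕ} (hn : 2 ≤ n)
    (A B : Matrix (Fin n) (Fin n) ℝ) (hA : A.IsSymm) (hB : B.IsSymm)
    (htA : A.trace > 0) (htB : B.trace > 0)
    (hσA : sigma2M A > 0) (hσB : sigma2M B > 0) :
    sigma11M A B ≥ Real.sqrt (sigma2M A * sigma2M B) ∧
      (sigma11M A B = Real.sqrt (sigma2M A * sigma2M B) ↔
        ∃ c : ℝ, c > 0 ∧ B = c • A) := by
  have hσAB : 0 ≤ sigma11M A B := sigma11M_nonneg hA hB htA.le htB.le hσA.le hσB.le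
  constructor
  · exact Real.sqrt_le_iff.mpr ⟨hσAB, sigma2M_mul_sigma2M_le_sigma11M_sq hA hB hσA⟩
  · rw [eq_comm, Real.sqrt_eq_iff_eq_sq (mul_pos hσA hσB).le hσAB,
      sigma2M_mul_sigma2M_eq_sigma11M_sq_iff hA hB hσA]
    exact smul_eq_smul_iff_exists_pos_smul (traceLinearMap (Fin n) ℝ ℝ) htA htB
end
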